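/- There exists a constant C > 0 such that for every integer m with 1 ≤ m ≤ 2 and all Schwartz functions f, g : ℝ³ → ℝ one has ‖∇^m(fg)‖_{L²} ≤ C (‖∇f‖_{L²} + ‖∇²f‖_{L²}) (‖∇g‖_{L²} + ‖∇²g‖_{L²}). -/

import Mathlib

open MeasureTheory
open scoped NNReal ENNReal

/-!
By the Leibniz rule and Hölder's inequality, `‖∇^m(fg)‖₂` is controlled by the products
`‖∇^i f‖_{2m/i} ‖∇^{m-i} g‖_{2m/(m-i)}`, so every factor is an `L²`, `L⁴` or `L^∞` norm.

For the `L^∞` norm, `‖f‖_∞ ≤ ‖𝓕 f‖₁`, and Cauchy–Schwarz against the weight `1 / (|ξ| + |ξ|²)`,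
which is square integrable exactly in dimension three, leaves the `L²` norm of `(|ξ| + |ξ|²) 𝓕 f`,
which Plancherel turns into `‖∇f‖₂ + ‖∇²f‖₂`.

For the `L⁴` norm of `u = ∂_v f`, integrating `∫ ‖u‖⁴ = ∫ ⟪‖u‖² u, ∂_v f⟫` by parts gives
`‖u‖₄⁴ ≤ 3 ‖f‖_∞ ‖u‖₄² ‖∂_v u‖₂`, that is, the Gagliardo–Nirenberg inequality
`‖u‖₄² ≤ 3 ‖f‖_∞ ‖∂_v u‖₂`.
-/

open scoped SchwartzMap FourierTransform LineDeriv InnerProductSpace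

section OrthonormalBasis

variable {ι E F : Type*} [Fintype ι] [NormedAddCommGroup E] [InnerProductSpace ℝ E]
  [NormedAddCommGroup F] [NormedSpace ℝ F]

lemma opNorm_le_sum_norm_apply_orthonormalBasis (b : OrthonormalBasis ι ℝ E) (L : E →L[ℝ] F) :
    ‖L‖ ≤ ∑ i, ‖L (b i)‖ := by
  refine L.opNorm_le_bound (by positivity) fun v => ?_
  calc ‖L v‖ = ‖∑ i, ⟪b i, v⟫_ℝ • L (b i)‖ := by
        conv_lhs => rw [← b.sum_repr' v]
        simp only [map_sum, map_smul]
    _ ≤ ∑ i, ‖v‖ * ‖L (b i)‖ := norm_sum_le_of_le _ fun i _ => by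
        rw [norm_smul]
        gcongr
        simpa using norm_inner_le_norm (𝕜 := ℝ) (b i) v
    _ = (∑ i, ‖L (b i)‖) * ‖v‖ := by rw [← Finset.mul_sum, mul_comm]

lemma norm_le_sum_norm_inner_orthonormalBasis (b : OrthonormalBasis ι ℝ E) (v : E) :
    ‖v‖ ≤ ∑ i, ‖⟪v, b i⟫_ℝ‖ := by
  simpa using opNorm_le_sum_norm_apply_orthonormalBasis b (innerSL ℝ v)

end OrthonormalBasis

section Leibniz

variable {𝕜 E F G H : Type*} [NontriviallyNormedField 𝕜]
  [NormedAddCommGroup E] [NormedSpace 𝕜 E] [NormedAddCommGroup F] [NormedSpace 𝕜 F]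
  [NormedAddCommGroup G] [NormedSpace 𝕜 G] [NormedAddCommGroup H] [NormedSpace 𝕜 H]
  [MeasurableSpace E] [OpensMeasurableSpace E] [SecondCountableTopology E] {μ : Measure E}

lemma aestronglyMeasurable_iteratedFDeriv {m i : ℕ} {f : E → F} (hf : ContDiff 𝕜 m f)
    (hi : i ≤ m) : AEStronglyMeasurable (iteratedFDeriv 𝕜 i f) μ :=
  (hf.continuous_iteratedFDeriv (by exact_mod_cast hi)).aestronglyMeasurable

lemma eLpNorm_iteratedFDeriv_bilinear_le (B : F →L[𝕜] G →L[𝕜] H) {m : ℕ} {f : E → F} {g : E → G}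
    (hf : ContDiff 𝕜 m f) (hg : ContDiff 𝕜 m g) {r : ℝ≥0∞} (hr : 1 ≤ r) {p q : ℕ → ℝ≥0∞}
    (hpq : ∀ i ≤ m, ENNReal.HolderTriple (p i) (q (m - i)) r) :
    eLpNorm (iteratedFDeriv 𝕜 m fun x => B (f x) (g x)) r μ ≤
      ‖B‖ₑ * ∑ i ∈ Finset.range (m + 1), (m.choose i : ℝ≥0∞) *
        (eLpNorm (iteratedFDeriv 𝕜 i f) (p i) μ *
          eLpNorm (iteratedFDeriv 𝕜 (m - i) g) (q (m - i)) μ) := by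
  let T : ℕ → E → ℝ := fun i x => ‖iteratedFDeriv 𝕜 i f x‖ * ‖iteratedFDeriv 𝕜 (m - i) g x‖
  have hfm {i : ℕ} (hi : i ≤ m) := aestronglyMeasurable_iteratedFDeriv (μ := μ) hf hi
  have hgm {i : ℕ} (hi : i ≤ m) := aestronglyMeasurable_iteratedFDeriv (μ := μ) hg hi
  have hT {i : ℕ} (hi : i ≤ m) : eLpNorm (T i) r μ ≤
      eLpNorm (iteratedFDeriv 𝕜 i f) (p i) μ *
        eLpNorm (iteratedFDeriv 𝕜 (m - i) g) (q (m - i)) μ := by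
    have := hpq i hi
    simpa using eLpNorm_le_eLpNorm_mul_eLpNorm_of_nnnorm (p := p i) (q := q (m - i)) (r := r)
      (hfm hi) (hgm (m.sub_le i)) (fun a b => ‖a‖ * ‖b‖) 1 (by simp)
  calc eLpNorm (iteratedFDeriv 𝕜 m fun x => B (f x) (g x)) r μ
      ≤ eLpNorm (‖B‖ • ∑ i ∈ Finset.range (m + 1), (m.choose i : ℝ) • T i) r μ :=
        eLpNorm_mono_real fun x => by
          simpa [T, mul_assoc] using B.norm_iteratedFDeriv_le_of_bilinear hf hg x le_rfl
    _ ≤ ‖B‖ₑ * ∑ i ∈ Finset.range (m + 1), eLpNorm ((m.choose i : ℝ) • T i) r μ := by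
        rw [eLpNorm_const_smul, Real.enorm_of_nonneg (norm_nonneg B), ofReal_norm]
        gcongr
        refine eLpNorm_sum_le (fun i hi => ?_) hr
        exact ((hfm (Finset.mem_range_succ_iff.1 hi)).norm.mul
          (hgm (m.sub_le i)).norm).const_smul _
    _ ≤ _ := by
        gcongr with i hi
        rw [eLpNorm_const_smul, Real.enorm_natCast]
        gcongr
        exact hT (Finset.mem_range_succ_iff.1 hi)

lemma holderTriple_mul_div {r : ℝ≥0∞} (hr : r ≠ 0) {m i : ℕ} (hm : m ≠ 0) (hi : i ≤ m) :
    ENNReal.HolderTriple (r * m / i) (r * m / (m - i : ℕ)) r where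
  inv_add_inv_eq_inv := by
    have hm' : (m : ℝ≥0∞) ≠ 0 := by exact_mod_cast hm
    have hrm : r * m ≠ 0 := mul_ne_zero hr hm'
    rw [ENNReal.inv_div (.inl (ENNReal.natCast_ne_top _)) (.inr hrm),
      ENNReal.inv_div (.inl (ENNReal.natCast_ne_top _)) (.inr hrm), ← ENNReal.add_div,
      ← Nat.cast_add, Nat.add_sub_cancel' hi]
    simpa using ENNReal.mul_div_mul_right 1 r hm' (ENNReal.natCast_ne_top m)

end Leibniz

section SchwartzDerivatives

variable {E F : Type*} [NormedAddCommGroup E] [NormedSpace ℝ E]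
  [NormedAddCommGroup F] [NormedSpace ℝ F]

lemma norm_lineDerivOp_le_iteratedFDeriv (f : 𝓢(E, F)) (v x : E) :
    ‖∂_{v} f x‖ ≤ ‖v‖ * ‖iteratedFDeriv ℝ 1 f x‖ := by
  rw [norm_iteratedFDeriv_one, SchwartzMap.lineDerivOp_apply_eq_fderiv, mul_comm]
  exact (fderiv ℝ f x).le_opNorm v

lemma norm_lineDerivOp_lineDerivOp_le_iteratedFDeriv (f : 𝓢(E, F)) (v w x : E) :
    ‖∂_{v} (∂_{w} f) x‖ ≤ ‖v‖ * ‖w‖ * ‖iteratedFDeriv ℝ 2 f x‖ := by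
  have hiterated : ∂_{v} (∂_{w} f) x = iteratedFDeriv ℝ 2 f x ![v, w] := by
    rw [← SchwartzMap.iteratedLineDerivOp_eq_iteratedFDeriv]
    simp [LineDeriv.iteratedLineDerivOp_succ_left]
  rw [hiterated, mul_comm]
  simpa [Fin.prod_univ_succ] using (iteratedFDeriv ℝ 2 f x).le_opNorm ![v, w]

end SchwartzDerivatives

section GagliardoNirenberg

lemma eLpNorm_natCast_pow_eq_lintegral {α F : Type*} [MeasurableSpace α] [NormedAddCommGroup F]
    (μ : Measure α) (u : α → F) {n : ℕ} (hn : n ≠ 0) :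
    eLpNorm u n μ ^ n = ∫⁻ x, ‖u x‖ₑ ^ n ∂μ := by
  simpa using eLpNorm_nnreal_pow_eq_lintegral (μ := μ) (f := u) (p := n) (by exact_mod_cast hn)

lemma eLpNorm_norm_sq_two {α F : Type*} [MeasurableSpace α] [NormedAddCommGroup F]
    (μ : Measure α) (u : α → F) : eLpNorm (fun x => ‖u x‖ ^ 2) 2 μ = eLpNorm u 4 μ ^ 2 := by
  have hrpow := eLpNorm_norm_rpow (p := 2) (μ := μ) u (q := 2) (by norm_num)
  norm_num at hrpow
  exact_mod_cast hrpow

variable {E F : Type*} [NormedAddCommGroup E] [NormedAddCommGroup F] [InnerProductSpace ℝ F]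

/-- The cubic nonlinearity `‖u‖² u`, as a Schwartz function. It is the multiplier whose pairing with
`u` is `‖u‖⁴`, for the integration by parts behind the Gagliardo–Nirenberg inequality. -/
noncomputable def cubicSchwartz [NormedSpace ℝ E] (u : 𝓢(E, F)) : 𝓢(E, F) :=
  SchwartzMap.pairing (ContinuousLinearMap.lsmul ℝ ℝ) (SchwartzMap.pairing (innerSL ℝ) u u) u

lemma cubicSchwartz_apply [NormedSpace ℝ E] (u : 𝓢(E, F)) (x : E) :
    cubicSchwartz u x = ‖u x‖ ^ 2 • u x :=
  congrArg (· • u x) (real_inner_self_eq_norm_sq (u x))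

lemma norm_lineDerivOp_cubicSchwartz_le [NormedSpace ℝ E] (u : 𝓢(E, F)) (v x : E) :
    ‖∂_{v} (cubicSchwartz u) x‖ ≤ 3 * (‖u x‖ ^ 2 * ‖∂_{v} u x‖) := by
  have hderiv : ∂_{v} (cubicSchwartz u) x =
      ‖u x‖ ^ 2 • ∂_{v} u x + (2 * ⟪u x, ∂_{v} u x⟫_ℝ) • u x := by
    have hu := u.hasFDerivAt x
    rw [SchwartzMap.lineDerivOp_apply_eq_fderiv, funext (cubicSchwartz_apply u),
      (hu.norm_sq.fun_smul hu).fderiv, SchwartzMap.lineDerivOp_apply_eq_fderiv]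
    simp
  calc ‖∂_{v} (cubicSchwartz u) x‖
      ≤ ‖u x‖ ^ 2 * ‖∂_{v} u x‖ + 2 * ‖⟪u x, ∂_{v} u x⟫_ℝ‖ * ‖u x‖ := by
        rw [hderiv]
        exact (norm_add_le _ _).trans_eq (by simp [norm_smul])
    _ ≤ ‖u x‖ ^ 2 * ‖∂_{v} u x‖ + 2 * (‖u x‖ * ‖∂_{v} u x‖) * ‖u x‖ := by
        gcongr
        exact norm_inner_le_norm _ _
    _ = 3 * (‖u x‖ ^ 2 * ‖∂_{v} u x‖) := by ring

lemma eLpNorm_lineDerivOp_cubicSchwartz_one_le [NormedSpace ℝ E] [MeasurableSpace E]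
    [OpensMeasurableSpace E] (μ : Measure E) (u : 𝓢(E, F)) (v : E) :
    eLpNorm (∂_{v} (cubicSchwartz u) : 𝓢(E, F)) 1 μ ≤
      3 * (eLpNorm u 4 μ ^ 2 * eLpNorm (∂_{v} u : 𝓢(E, F)) 2 μ) := by
  have hu : AEStronglyMeasurable (fun x => ‖u x‖ ^ 2) μ :=
    (u.continuous.norm.pow 2).aestronglyMeasurable
  have hu' : AEStronglyMeasurable (fun x => ‖∂_{v} u x‖) μ :=
    (∂_{v} u : 𝓢(E, F)).continuous.norm.aestronglyMeasurable
  calc eLpNorm (∂_{v} (cubicSchwartz u) : 𝓢(E, F)) 1 μ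
      ≤ 3 * eLpNorm ((fun x => ‖u x‖ ^ 2) • fun x => ‖∂_{v} u x‖) 1 μ := by
        simpa using eLpNorm_le_mul_eLpNorm_of_ae_le_mul (μ := μ) (c := 3)
          (g := (fun x => ‖u x‖ ^ 2) • fun x => ‖∂_{v} u x‖)
          (.of_forall fun x => by simpa using norm_lineDerivOp_cubicSchwartz_le u v x) 1
    _ ≤ 3 * (eLpNorm (fun x => ‖u x‖ ^ 2) 2 μ * eLpNorm (fun x => ‖∂_{v} u x‖) 2 μ) := by
        gcongr
        exact eLpNorm_smul_le_mul_eLpNorm hu' hu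
    _ = 3 * (eLpNorm u 4 μ ^ 2 * eLpNorm (∂_{v} u : 𝓢(E, F)) 2 μ) := by
        rw [eLpNorm_norm_sq_two, eLpNorm_norm]

section HaarMeasure

variable [NormedSpace ℝ E] [FiniteDimensional ℝ E] [MeasurableSpace E] [BorelSpace E]
  (μ : Measure E) [μ.IsAddHaarMeasure]

lemma eLpNorm_lineDerivOp_four_pow_four_le (f : 𝓢(E, F)) (v : E) :
    eLpNorm (∂_{v} f : 𝓢(E, F)) 4 μ ^ 4 ≤
      eLpNorm (∂_{v} (cubicSchwartz (∂_{v} f)) : 𝓢(E, F)) 1 μ * eLpNorm f ∞ μ := by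
  set u : 𝓢(E, F) := ∂_{v} f
  set w := cubicSchwartz u
  have hpow (x : E) : ⟪w x, u x⟫_ℝ = ‖u x‖ ^ 4 := by
    rw [cubicSchwartz_apply, real_inner_smul_left, real_inner_self_eq_norm_sq]
    ring
  have hint : Integrable (fun x => ⟪w x, u x⟫_ℝ) μ :=
    (SchwartzMap.pairing (innerSL ℝ) w u).integrable
  calc eLpNorm u 4 μ ^ 4 = ‖∫ x, ⟪w x, u x⟫_ℝ ∂μ‖ₑ := by
        simp_rw [hpow] at hint ⊢
        rw [← Nat.cast_ofNat, eLpNorm_natCast_pow_eq_lintegral μ _ four_ne_zero,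
          Real.enorm_of_nonneg (by positivity),
          ofReal_integral_eq_lintegral_ofReal hint (.of_forall fun x => by positivity)]
        simp_rw [ENNReal.ofReal_pow (norm_nonneg _), ofReal_norm]
    _ = ‖∫ x, ⟪∂_{v} w x, f x⟫_ℝ ∂μ‖ₑ := by
        rw [← enorm_neg (∫ x, ⟪∂_{v} w x, f x⟫_ℝ ∂μ)]
        exact congrArg _ (SchwartzMap.integral_bilinear_lineDerivOp_right_eq_neg_left w f
          (innerSL ℝ) v)
    _ ≤ eLpNorm (fun x => ⟪∂_{v} w x, f x⟫_ℝ) 1 μ := by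
        rw [eLpNorm_one_eq_lintegral_enorm]
        exact enorm_integral_le_lintegral_enorm _
    _ ≤ eLpNorm (∂_{v} w : 𝓢(E, F)) 1 μ * eLpNorm f ∞ μ := by
        simpa using eLpNorm_le_eLpNorm_mul_eLpNorm_top 1
          (∂_{v} w : 𝓢(E, F)).continuous.aestronglyMeasurable f (fun a b => ⟪a, b⟫_ℝ) 1
          (.of_forall fun x => by simpa using nnnorm_inner_le_nnnorm (𝕜 := ℝ) (∂_{v} w x) (f x))

lemma eLpNorm_lineDerivOp_four_sq_le (f : 𝓢(E, F)) (v : E) :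
    eLpNorm (∂_{v} f : 𝓢(E, F)) 4 μ ^ 2 ≤
      3 * eLpNorm f ∞ μ * eLpNorm (∂_{v} (∂_{v} f) : 𝓢(E, F)) 2 μ := by
  set a := eLpNorm (∂_{v} f : 𝓢(E, F)) 4 μ
  have ha : a ≠ ∞ := ((∂_{v} f : 𝓢(E, F)).eLpNorm_lt_top 4 μ).ne
  rcases eq_or_ne a 0 with h0 | h0
  · simp [h0]
  rw [← ENNReal.mul_le_mul_iff_right (pow_ne_zero 2 h0) (ENNReal.pow_ne_top ha)]
  calc a ^ 2 * a ^ 2 = a ^ 4 := by ring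
    _ ≤ 3 * (a ^ 2 * eLpNorm (∂_{v} (∂_{v} f) : 𝓢(E, F)) 2 μ) * eLpNorm f ∞ μ := by
        grw [eLpNorm_lineDerivOp_four_pow_four_le, eLpNorm_lineDerivOp_cubicSchwartz_one_le]
    _ = a ^ 2 * (3 * eLpNorm f ∞ μ * eLpNorm (∂_{v} (∂_{v} f) : 𝓢(E, F)) 2 μ) := by ring

end HaarMeasure

lemma eLpNorm_iteratedFDeriv_one_four_le [InnerProductSpace ℝ E] [FiniteDimensional ℝ E]
    [MeasurableSpace E] [BorelSpace E] (μ : Measure E) [μ.IsAddHaarMeasure] (f : 𝓢(E, F)) :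
    eLpNorm (iteratedFDeriv ℝ 1 f) 4 μ ≤ Module.finrank ℝ E *
      (3 * eLpNorm f ∞ μ * eLpNorm (iteratedFDeriv ℝ 2 f) 2 μ) ^ (2⁻¹ : ℝ) := by
  set b := stdOrthonormalBasis ℝ E
  have hdir (i) : eLpNorm (∂_{b i} f : 𝓢(E, F)) 4 μ ≤
      (3 * eLpNorm f ∞ μ * eLpNorm (iteratedFDeriv ℝ 2 f) 2 μ) ^ (2⁻¹ : ℝ) := by
    rw [ENNReal.le_rpow_inv_iff two_pos, ENNReal.rpow_two]
    grw [eLpNorm_lineDerivOp_four_sq_le]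
    gcongr
    exact eLpNorm_mono fun x => by
      simpa using norm_lineDerivOp_lineDerivOp_le_iteratedFDeriv f (b i) (b i) x
  calc eLpNorm (iteratedFDeriv ℝ 1 f) 4 μ ≤ eLpNorm (∑ i, fun x => ‖∂_{b i} f x‖) 4 μ :=
        eLpNorm_mono_real fun x => by
          simpa [norm_iteratedFDeriv_one, SchwartzMap.lineDerivOp_apply_eq_fderiv] using
            opNorm_le_sum_norm_apply_orthonormalBasis b (fderiv ℝ f x)
    _ ≤ ∑ i, eLpNorm (∂_{b i} f : 𝓢(E, F)) 4 μ := by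
        refine (eLpNorm_sum_le (fun i _ => ?_) (by norm_num)).trans_eq (by simp only [eLpNorm_norm])
        exact (∂_{b i} f : 𝓢(E, F)).continuous.norm.aestronglyMeasurable
    _ ≤ _ := (Finset.sum_le_card_nsmul _ _ _ fun i _ => hdir i).trans_eq (by simp)

end GagliardoNirenberg

section SobolevWeight

/-- The Fourier weight `1 / (|ξ| + |ξ|²)`, with the junk value `0` at the origin, for which
Cauchy–Schwarz trades the `L¹` norm of a Fourier transform for `L²` norms of derivatives. -/
noncomputable def sobolevWeight {E : Type*} [NormedAddCommGroup E] (ξ : E) : ℝ :=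
  (‖ξ‖ + ‖ξ‖ ^ 2)⁻¹

lemma measurable_sobolevWeight {E : Type*} [NormedAddCommGroup E] [MeasurableSpace E]
    [OpensMeasurableSpace E] : Measurable (sobolevWeight : E → ℝ) := by
  unfold sobolevWeight
  fun_prop

lemma memLp_sobolevWeight {E : Type*} [NormedAddCommGroup E] [NormedSpace ℝ E]
    [MeasurableSpace E] [BorelSpace E] (μ : Measure E) [μ.IsAddHaarMeasure]
    (hE : Module.finrank ℝ E = 3) : MemLp (sobolevWeight : E → ℝ) 2 μ := by
  have : FiniteDimensional ℝ E := Module.finite_of_finrank_pos (by omega)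
  have : Nontrivial E := Module.nontrivial_of_finrank_pos (R := ℝ) (by omega)
  rw [memLp_two_iff_integrable_sq measurable_sobolevWeight.aestronglyMeasurable]
  refine (integrable_fun_norm_addHaar μ (f := fun r : ℝ => (r + r ^ 2)⁻¹ ^ 2)).2 ?_
  refine (integrable_inv_one_add_sq.integrableOn (s := Set.Ioi 0)).mono'
    (Measurable.aestronglyMeasurable (by fun_prop)) ?_
  filter_upwards [self_mem_ae_restrict measurableSet_Ioi] with r (hr : 0 < r)
  calc ‖r ^ (Module.finrank ℝ E - 1) • (r + r ^ 2)⁻¹ ^ 2‖ = ((1 + r) ^ 2)⁻¹ := by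
        rw [Real.norm_of_nonneg (by positivity), hE, smul_eq_mul]
        field_simp
    _ ≤ (1 + r ^ 2)⁻¹ := by
        gcongr
        nlinarith

end SobolevWeight

section SupBound

variable {E : Type*} [NormedAddCommGroup E] [InnerProductSpace ℝ E] [FiniteDimensional ℝ E]
  [MeasurableSpace E] [BorelSpace E]

/-- The `L²` size `‖∇f‖₂ + ‖∇²f‖₂` of the first and second derivatives of `f`. -/
noncomputable def gradHessNorm {F : Type*} [NormedAddCommGroup F] [NormedSpace ℝ F] (f : E → F) :
    ℝ≥0∞ :=
  eLpNorm (iteratedFDeriv ℝ 1 f) 2 volume + eLpNorm (iteratedFDeriv ℝ 2 f) 2 volume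

lemma eLpNorm_lineDerivOp_add_le_gradHessNorm {F : Type*} [NormedAddCommGroup F] [NormedSpace ℝ F]
    (f : 𝓢(E, F)) {v : E} (hv : ‖v‖ ≤ 1) :
    eLpNorm (∂_{v} f : 𝓢(E, F)) 2 volume + eLpNorm (∂_{v} (∂_{v} f) : 𝓢(E, F)) 2 volume ≤
      gradHessNorm f := by
  refine add_le_add (eLpNorm_mono fun x => ?_) (eLpNorm_mono fun x => ?_)
  · exact (norm_lineDerivOp_le_iteratedFDeriv f v x).trans
      (mul_le_of_le_one_left (norm_nonneg _) hv)
  · exact (norm_lineDerivOp_lineDerivOp_le_iteratedFDeriv f v v x).trans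
      (mul_le_of_le_one_left (norm_nonneg _) (mul_le_one₀ hv (norm_nonneg _) hv))

section Complex

variable {H : Type*} [NormedAddCommGroup H] [InnerProductSpace ℂ H]

lemma norm_fourier_lineDerivOp (h : 𝓢(E, H)) (v ξ : E) :
    ‖𝓕 (∂_{v} h) ξ‖ = 2 * Real.pi * ‖⟪ξ, v⟫_ℝ‖ * ‖𝓕 h ξ‖ := by
  have hgrowth : (fun ξ : E => ⟪ξ, v⟫_ℝ).HasTemperateGrowth := by fun_prop
  rw [SchwartzMap.fourier_lineDerivOp_eq, smul_apply, SchwartzMap.smulLeftCLM_apply_apply hgrowth]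
  simp [norm_smul, abs_of_pos Real.pi_pos, mul_assoc]

lemma norm_inner_mul_norm_fourier_le (h : 𝓢(E, H)) (v ξ : E) :
    ‖⟪ξ, v⟫_ℝ‖ * ‖𝓕 h ξ‖ ≤ ‖𝓕 (∂_{v} h) ξ‖ := by
  rw [norm_fourier_lineDerivOp, mul_assoc]
  exact le_mul_of_one_le_left (by positivity) (by linarith [Real.pi_gt_three])

lemma norm_add_sq_mul_norm_fourier_le {ι : Type*} [Fintype ι] (b : OrthonormalBasis ι ℝ E)
    (h : 𝓢(E, H)) (ξ : E) :
    (‖ξ‖ + ‖ξ‖ ^ 2) * ‖𝓕 h ξ‖ ≤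
      ∑ i, (‖𝓕 (∂_{b i} h) ξ‖ + ‖𝓕 (∂_{b i} (∂_{b i} h)) ξ‖) := by
  have hsq (i) : ‖⟪ξ, b i⟫_ℝ‖ ^ 2 * ‖𝓕 h ξ‖ ≤ ‖𝓕 (∂_{b i} (∂_{b i} h)) ξ‖ := by
    rw [sq, mul_assoc]
    grw [norm_inner_mul_norm_fourier_le h (b i), norm_inner_mul_norm_fourier_le (∂_{b i} h) (b i)]
  calc (‖ξ‖ + ‖ξ‖ ^ 2) * ‖𝓕 h ξ‖
      ≤ (∑ i, ‖⟪ξ, b i⟫_ℝ‖ + ∑ i, ‖⟪ξ, b i⟫_ℝ‖ ^ 2) * ‖𝓕 h ξ‖ := by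
        gcongr
        · exact norm_le_sum_norm_inner_orthonormalBasis b ξ
        · exact (b.sum_sq_norm_inner_left ξ).ge
    _ = ∑ i, (‖⟪ξ, b i⟫_ℝ‖ * ‖𝓕 h ξ‖ + ‖⟪ξ, b i⟫_ℝ‖ ^ 2 * ‖𝓕 h ξ‖) := by
        rw [← Finset.sum_add_distrib, Finset.sum_mul]
        simp only [add_mul]
    _ ≤ _ := by
        gcongr with i
        · exact norm_inner_mul_norm_fourier_le h (b i) ξ
        · exact hsq i

lemma eLpNorm_fourier_one_le [Nontrivial E] (h : 𝓢(E, H)) :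
    eLpNorm (𝓕 h : 𝓢(E, H)) 1 volume ≤ eLpNorm (sobolevWeight : E → ℝ) 2 volume *
      eLpNorm (fun ξ => (‖ξ‖ + ‖ξ‖ ^ 2) * ‖𝓕 h ξ‖) 2 volume := by
  have hmeas : AEStronglyMeasurable (fun ξ => (‖ξ‖ + ‖ξ‖ ^ 2) * ‖𝓕 h ξ‖) volume :=
    ((continuous_norm.add (continuous_norm.pow 2)).mul
      (𝓕 h).continuous.norm).aestronglyMeasurable
  refine (eLpNorm_mono_ae ?_).trans
    (eLpNorm_smul_le_mul_eLpNorm hmeas measurable_sobolevWeight.aestronglyMeasurable)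
  filter_upwards [Measure.ae_ne volume (0 : E)] with ξ hξ
  have hpos : 0 < ‖ξ‖ := norm_pos_iff.2 hξ
  have hcancel : sobolevWeight ξ * (‖ξ‖ + ‖ξ‖ ^ 2) = 1 :=
    inv_mul_cancel₀ (add_pos hpos (pow_pos hpos 2)).ne'
  rw [Pi.smul_apply', smul_eq_mul, ← mul_assoc, hcancel, one_mul, norm_norm]

variable [CompleteSpace H]

lemma eLpNorm_fourier (h : 𝓢(E, H)) :
    eLpNorm (𝓕 h : 𝓢(E, H)) 2 volume = eLpNorm h 2 volume := by
  have hnorm := h.norm_fourier_toL2_eq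
  rw [SchwartzMap.norm_toLp, SchwartzMap.norm_toLp] at hnorm
  exact (ENNReal.toReal_eq_toReal_iff' ((𝓕 h : 𝓢(E, H)).eLpNorm_lt_top 2 volume).ne
    (h.eLpNorm_lt_top 2 volume).ne).1 hnorm

lemma enorm_le_eLpNorm_fourier_one (h : 𝓢(E, H)) (x : E) :
    ‖h x‖ₑ ≤ eLpNorm (𝓕 h : 𝓢(E, H)) 1 volume := by
  have hinv : 𝓕⁻ (𝓕 h) = h := FourierTransform.fourierInv_fourier_eq h
  have hx : h x = 𝓕 (𝓕 h) (-x) := by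
    conv_lhs => rw [← hinv, SchwartzMap.fourierInv_apply_eq]
    simp
  have hsup := (𝓕 h).norm_fourier_apply_le_toLp_one (-x)
  rw [← hx, SchwartzMap.norm_toLp] at hsup
  rw [← ofReal_norm]
  exact ENNReal.ofReal_le_of_le_toReal hsup

lemma eLpNorm_norm_add_sq_mul_norm_fourier_le (h : 𝓢(E, H)) :
    eLpNorm (fun ξ => (‖ξ‖ + ‖ξ‖ ^ 2) * ‖𝓕 h ξ‖) 2 volume ≤
      Module.finrank ℝ E * gradHessNorm h := by
  set b := stdOrthonormalBasis ℝ E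
  have hmeas (k : 𝓢(E, H)) : AEStronglyMeasurable (fun ξ => ‖𝓕 k ξ‖) volume :=
    (𝓕 k).continuous.norm.aestronglyMeasurable
  calc eLpNorm (fun ξ => (‖ξ‖ + ‖ξ‖ ^ 2) * ‖𝓕 h ξ‖) 2 volume
      ≤ eLpNorm (∑ i, ((fun ξ => ‖𝓕 (∂_{b i} h) ξ‖) + fun ξ => ‖𝓕 (∂_{b i} (∂_{b i} h)) ξ‖)) 2
          volume := eLpNorm_mono_real fun ξ => by
        rw [Real.norm_of_nonneg (by positivity)]
        simpa using norm_add_sq_mul_norm_fourier_le b h ξ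
    _ ≤ ∑ i, eLpNorm ((fun ξ => ‖𝓕 (∂_{b i} h) ξ‖) + fun ξ => ‖𝓕 (∂_{b i} (∂_{b i} h)) ξ‖) 2
          volume :=
        eLpNorm_sum_le (fun i _ => (hmeas _).add (hmeas _)) one_le_two
    _ ≤ ∑ i, (eLpNorm (∂_{b i} h : 𝓢(E, H)) 2 volume +
          eLpNorm (∂_{b i} (∂_{b i} h) : 𝓢(E, H)) 2 volume) := by
        gcongr with i
        refine (eLpNorm_add_le (hmeas _) (hmeas _) one_le_two).trans_eq ?_
        rw [eLpNorm_norm, eLpNorm_norm, eLpNorm_fourier, eLpNorm_fourier]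
    _ ≤ Module.finrank ℝ E * gradHessNorm h :=
        (Finset.sum_le_card_nsmul _ _ _ fun i _ =>
          eLpNorm_lineDerivOp_add_le_gradHessNorm h (b.norm_eq_one i).le).trans_eq (by simp)

lemma enorm_le_gradHessNorm_of_complex [Nontrivial E] (h : 𝓢(E, H)) (x : E) :
    ‖h x‖ₑ ≤ eLpNorm (sobolevWeight : E → ℝ) 2 volume *
      (Module.finrank ℝ E * gradHessNorm h) := by
  grw [enorm_le_eLpNorm_fourier_one, eLpNorm_fourier_one_le,
    eLpNorm_norm_add_sq_mul_norm_fourier_le]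

end Complex

variable {F : Type*} [NormedAddCommGroup F] [NormedSpace ℝ F]

lemma gradHessNorm_clm_comp_le {G : Type*} [NormedAddCommGroup G] [NormedSpace ℝ G]
    {L : F →L[ℝ] G} (hL : ‖L‖ ≤ 1) {f : E → F} (hf : ContDiff ℝ 2 f) :
    gradHessNorm (L ∘ f) ≤ gradHessNorm f := by
  refine add_le_add ?_ ?_ <;>
  · refine eLpNorm_mono fun x => ?_
    refine (L.norm_iteratedFDeriv_comp_left hf.contDiffAt (by norm_num)).trans ?_
    exact mul_le_of_le_one_left (norm_nonneg _) hL

lemma enorm_le_gradHessNorm [Nontrivial E] (f : 𝓢(E, F)) (x : E) :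
    ‖f x‖ₑ ≤ eLpNorm (sobolevWeight : E → ℝ) 2 volume *
      (Module.finrank ℝ E * gradHessNorm f) := by
  -- A norming functional reduces to the complex-valued case, where Plancherel is available.
  obtain ⟨φ, hφ, hφx⟩ := exists_dual_vector'' ℝ (f x)
  set L : F →L[ℝ] ℂ := Complex.ofRealCLM ∘L φ
  have hL : ‖L‖ ≤ 1 := by
    refine (Complex.ofRealCLM.opNorm_comp_le φ).trans ?_
    simpa using hφ
  calc ‖f x‖ₑ = ‖f.postcompCLM L x‖ₑ := by
        rw [← ofReal_norm, ← ofReal_norm]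
        simp [L, hφx]
    _ ≤ eLpNorm (sobolevWeight : E → ℝ) 2 volume *
          (Module.finrank ℝ E * gradHessNorm (f.postcompCLM L)) :=
        enorm_le_gradHessNorm_of_complex _ x
    _ ≤ _ := by
        gcongr
        exact gradHessNorm_clm_comp_le hL (f.smooth 2)

lemma eLpNorm_top_le_gradHessNorm [Nontrivial E] (f : 𝓢(E, F)) :
    eLpNorm f ∞ volume ≤ eLpNorm (sobolevWeight : E → ℝ) 2 volume *
      (Module.finrank ℝ E * gradHessNorm f) := by
  rw [eLpNorm_exponent_top]
  exact eLpNormEssSup_le_of_ae_enorm_bound (.of_forall (enorm_le_gradHessNorm f))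

lemma exists_eLpNorm_top_le_gradHessNorm (hE : Module.finrank ℝ E = 3) :
    ∃ K : ℝ≥0, ∀ f : 𝓢(E, F), eLpNorm f ∞ volume ≤ K * gradHessNorm f := by
  have : Nontrivial E := Module.nontrivial_of_finrank_pos (R := ℝ) (by omega)
  lift eLpNorm (sobolevWeight : E → ℝ) 2 volume to ℝ≥0
    using (memLp_sobolevWeight volume hE).eLpNorm_ne_top with W hW
  refine ⟨W * 3, fun f => (eLpNorm_top_le_gradHessNorm f).trans_eq ?_⟩
  rw [hE, ← hW]
  push_cast
  ring

end SupBound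

section Product

variable {E F G H : Type*} [NormedAddCommGroup E] [InnerProductSpace ℝ E] [FiniteDimensional ℝ E]
  [MeasurableSpace E] [BorelSpace E] [NormedAddCommGroup F] [InnerProductSpace ℝ F]
  [NormedAddCommGroup G] [InnerProductSpace ℝ G] [NormedAddCommGroup H] [NormedSpace ℝ H]

lemma exists_eLpNorm_iteratedFDeriv_one_four_le_gradHessNorm (hE : Module.finrank ℝ E = 3) :
    ∃ K : ℝ≥0, ∀ f : 𝓢(E, F), eLpNorm (iteratedFDeriv ℝ 1 f) 4 volume ≤ K * gradHessNorm f := by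
  obtain ⟨K, hK⟩ := exists_eLpNorm_top_le_gradHessNorm (F := F) hE
  refine ⟨3 * (3 * K) ^ (2⁻¹ : ℝ), fun f => ?_⟩
  calc eLpNorm (iteratedFDeriv ℝ 1 f) 4 volume
      ≤ 3 * (3 * eLpNorm f ∞ volume * eLpNorm (iteratedFDeriv ℝ 2 f) 2 volume) ^ (2⁻¹ : ℝ) := by
        simpa [hE] using eLpNorm_iteratedFDeriv_one_four_le volume f
    _ ≤ 3 * (3 * (K * gradHessNorm f) * gradHessNorm f) ^ (2⁻¹ : ℝ) := by
        gcongr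
        · exact hK f
        · exact le_add_self
    _ = 3 * (3 * K * gradHessNorm f ^ 2) ^ (2⁻¹ : ℝ) := by ring_nf
    _ = (3 * (3 * K) ^ (2⁻¹ : ℝ) : ℝ≥0) * gradHessNorm f := by
        rw [ENNReal.mul_rpow_of_nonneg _ _ (by positivity), ← ENNReal.rpow_two,
          ENNReal.rpow_rpow_inv two_ne_zero, ENNReal.coe_mul,
          ENNReal.coe_rpow_of_nonneg _ (by positivity)]
        push_cast
        ring

lemma exists_eLpNorm_iteratedFDeriv_le_gradHessNorm (hE : Module.finrank ℝ E = 3) :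
    ∃ K : ℝ≥0, ∀ m i : ℕ, 1 ≤ m → m ≤ 2 → i ≤ m → ∀ f : 𝓢(E, F),
      eLpNorm (iteratedFDeriv ℝ i f) (2 * m / i) volume ≤ K * gradHessNorm f := by
  obtain ⟨K₀, h₀⟩ := exists_eLpNorm_top_le_gradHessNorm (F := F) hE
  obtain ⟨K₁, h₁⟩ := exists_eLpNorm_iteratedFDeriv_one_four_le_gradHessNorm (F := F) hE
  refine ⟨K₀ + K₁ + 1, fun m i hm1 hm2 hi f => ?_⟩
  have hm0 : (m : ℝ≥0∞) ≠ 0 := Nat.cast_ne_zero.2 (by omega)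
  have henlarge {A : ℝ≥0} (hA : A ≤ K₀ + K₁ + 1) :
      A * gradHessNorm f ≤ (K₀ + K₁ + 1 : ℝ≥0) * gradHessNorm f := by gcongr
  obtain rfl | rfl | ⟨rfl, rfl⟩ : i = 0 ∨ i = m ∨ m = 2 ∧ i = 1 := by omega
  · have hzero : eLpNorm (iteratedFDeriv ℝ 0 f) ∞ volume = eLpNorm f ∞ volume :=
      eLpNorm_congr_norm_ae (.of_forall fun x => by simp)
    have hexp : (2 * m / (0 : ℕ) : ℝ≥0∞) = ∞ := by
      simpa using ENNReal.div_zero (mul_ne_zero two_ne_zero hm0)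
    rw [hexp, hzero]
    exact (h₀ f).trans (henlarge (le_add_right le_self_add))
  · have hexp : (2 * i / i : ℝ≥0∞) = 2 :=
      ENNReal.mul_div_cancel_right hm0 (ENNReal.natCast_ne_top i)
    have hle : eLpNorm (iteratedFDeriv ℝ i f) 2 volume ≤ gradHessNorm f := by
      obtain rfl | rfl : i = 1 ∨ i = 2 := by omega
      exacts [le_self_add, le_add_self]
    rw [hexp]
    exact hle.trans (by simpa using henlarge le_add_self)
  · have hexp : (2 * (2 : ℕ) / (1 : ℕ) : ℝ≥0∞) = 4 := by norm_num
    rw [hexp]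
    exact (h₁ f).trans (henlarge (le_add_right le_add_self))

theorem deriv_product_L2_le_general (hE : Module.finrank ℝ E = 3) :
    ∃ C : ℝ≥0, 0 < C ∧ ∀ m : ℕ, 1 ≤ m → m ≤ 2 →
      ∀ (f : 𝓢(E, F)) (g : 𝓢(E, G)) (B : F →L[ℝ] G →L[ℝ] H),
        eLpNorm (iteratedFDeriv ℝ m fun x => B (f x) (g x)) 2 volume ≤
          C * ‖B‖ₑ * gradHessNorm f * gradHessNorm g := by
  obtain ⟨K, hK⟩ := exists_eLpNorm_iteratedFDeriv_le_gradHessNorm (F := F) hE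
  obtain ⟨L, hL⟩ := exists_eLpNorm_iteratedFDeriv_le_gradHessNorm (F := G) hE
  refine ⟨4 * K * L + 1, by positivity, fun m hm1 hm2 f g B => ?_⟩
  calc eLpNorm (iteratedFDeriv ℝ m fun x => B (f x) (g x)) 2 volume
      ≤ ‖B‖ₑ * ∑ i ∈ Finset.range (m + 1), (m.choose i : ℝ≥0∞) *
          (eLpNorm (iteratedFDeriv ℝ i f) (2 * m / i) volume *
            eLpNorm (iteratedFDeriv ℝ (m - i) g) (2 * m / (m - i : ℕ)) volume) :=
        eLpNorm_iteratedFDeriv_bilinear_le B (f.smooth m) (g.smooth m) one_le_two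
          (p := fun i => 2 * m / i) (q := fun i => 2 * m / i) fun i hi =>
            holderTriple_mul_div two_ne_zero (by omega) hi
    _ ≤ ‖B‖ₑ * ∑ i ∈ Finset.range (m + 1), (m.choose i : ℝ≥0∞) *
          ((K * gradHessNorm f) * (L * gradHessNorm g)) := by
        gcongr with i hi
        · exact hK m i hm1 hm2 (Finset.mem_range_succ_iff.1 hi) f
        · exact hL m (m - i) hm1 hm2 (m.sub_le i) g
    _ = ‖B‖ₑ * (2 ^ m * ((K * gradHessNorm f) * (L * gradHessNorm g))) := by
        rw [← Finset.sum_mul, ← Nat.cast_sum, Nat.sum_range_choose, Nat.cast_pow, Nat.cast_ofNat]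
    _ ≤ ‖B‖ₑ * (2 ^ 2 * ((K * gradHessNorm f) * (L * gradHessNorm g))) := by
        gcongr
        exact one_le_two
    _ = (4 * K * L : ℝ≥0) * ‖B‖ₑ * gradHessNorm f * gradHessNorm g := by
        push_cast
        ring
    _ ≤ (4 * K * L + 1 : ℝ≥0) * ‖B‖ₑ * gradHessNorm f * gradHessNorm g := by
        gcongr
        exact le_self_add

end Product

/-- There is `C > 0` such that for every integer `1 ≤ m ≤ 2` and all Schwartz `f, g : ℝ³ → ℝ`,
`‖∇^m(fg)‖_{L²} ≤ C (‖∇f‖_{L²} + ‖∇²f‖_{L²}) (‖∇g‖_{L²} + ‖∇²g‖_{L²})`. -/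
theorem deriv_product_L2_le :
    ∃ C : ℝ≥0, 0 < C ∧ ∀ m : ℕ, 1 ≤ m → m ≤ 2 →
      ∀ f g : SchwartzMap (EuclideanSpace ℝ (Fin 3)) ℝ,
        eLpNorm (iteratedFDeriv ℝ m fun x => f x * g x) 2 volume ≤
          (C : ℝ≥0∞)
            * (eLpNorm (iteratedFDeriv ℝ 1 ⇑f) 2 volume
                + eLpNorm (iteratedFDeriv ℝ 2 ⇑f) 2 volume)
            * (eLpNorm (iteratedFDeriv ℝ 1 ⇑g) 2 volume
                + eLpNorm (iteratedFDeriv ℝ 2 ⇑g) 2 volume) := by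
  obtain ⟨C, hC, hbound⟩ := deriv_product_L2_le_general (E := EuclideanSpace ℝ (Fin 3))
    (F := ℝ) (G := ℝ) (H := ℝ) finrank_euclideanSpace_fin
  exact ⟨C, hC, fun m hm1 hm2 f g => by
    simpa [enorm, gradHessNorm] using hbound m hm1 hm2 f g (ContinuousLinearMap.mul ℝ ℝ)⟩
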